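/- arXiv:1912.08759 — 3 statements merged into one kernel-verified Lean document; each statement's English description precedes it below -/
import Mathlib

section
/- Let λ and μ be arbitrary nonnegative real numbers and let α, β be real numbers with α ≥ β ≥ 0. Then λ^α + μ^β ≥ 2^{-α} (λ + μ)^α whenever λ + μ < 1, and λ^α + μ^β ≥ 2^{-α} (λ + μ)^β whenever λ + μ ≥ 1. -/
/-- Lemma 3.1 (first inequality): for nonnegative reals `l`, `m` and exponents
`α ≥ β ≥ 0`, one has `l^α + m^β ≥ 2^(-α) (l+m)^α` if `l+m < 1`, and
`l^α + m^β ≥ 2^(-α) (l+m)^β` if `l+m ≥ 1`.  Here `^` is the real power. -/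
theorem power_sum_lower_bound (l m α β : ℝ) (hl : 0 ≤ l) (hm : 0 ≤ m)
    (hβ : 0 ≤ β) (hαβ : β ≤ α) :
    (l + m < 1 → (2 : ℝ) ^ (-α) * (l + m) ^ α ≤ l ^ α + m ^ β) ∧
    (1 ≤ l + m → (2 : ℝ) ^ (-α) * (l + m) ^ β ≤ l ^ α + m ^ β) := by
  have hs : 0 ≤ l + m := by linarith
  have hα : 0 ≤ α := hβ.trans hαβ
  have key : ∀ γ : ℝ, (2 : ℝ) ^ (-γ) * (l + m) ^ γ = ((l + m) / 2) ^ γ := by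
    intro γ
    rw [Real.div_rpow hs (by norm_num), Real.rpow_neg (by norm_num)]
    ring
  have hlα : 0 ≤ l ^ α := Real.rpow_nonneg hl _
  have hmβ : 0 ≤ m ^ β := Real.rpow_nonneg hm _
  have hs2 : 0 ≤ (l + m) / 2 := by linarith
  rcases le_or_gt m l with h | h
  · have h1 : ((l + m) / 2) ^ α ≤ l ^ α := Real.rpow_le_rpow hs2 (by linarith) hα
    rw [← key] at h1
    refine ⟨fun _ => by linarith, fun h2 => ?_⟩
    have h3 : (l + m) ^ β ≤ (l + m) ^ α := Real.rpow_le_rpow_of_exponent_le h2 hαβ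
    have h4 := mul_le_mul_of_nonneg_left h3 (Real.rpow_nonneg (by norm_num : (0:ℝ) ≤ 2) (-α))
    linarith
  · have h1 : ((l + m) / 2) ^ β ≤ m ^ β := Real.rpow_le_rpow hs2 (by linarith) hβ
    refine ⟨fun h2 => ?_, fun _ => ?_⟩
    · rw [key]
      have h3 : ((l + m) / 2) ^ α ≤ ((l + m) / 2) ^ β :=
        Real.rpow_le_rpow_of_exponent_ge (by linarith) (by linarith) hαβ
      linarith
    · rw [← key] at h1
      have h3 : (2 : ℝ) ^ (-α) ≤ 2 ^ (-β) :=
        Real.rpow_le_rpow_of_exponent_le (by norm_num) (by linarith)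
      have h4 := mul_le_mul_of_nonneg_right h3 (Real.rpow_nonneg hs β)
      linarith
end

section
/- Let n ≥ 1, let p be a real number with p ≥ 2, and let x, y be vectors in ℝⁿ. Then the inner product ⟨ |x|^{p-2} x − |y|^{p-2} y , x − y ⟩ is at least (2^{3-p}/p) · |x − y|^p, where |·| denotes the Euclidean norm. -/
open RealInnerProductSpace

/-- Tartar's inequality (case `p ≥ 2`): for `x, y ∈ ℝⁿ`,
`⟨|x|^{p-2} x − |y|^{p-2} y, x − y⟩ ≥ (2^{3-p}/p) |x − y|^p`. -/
theorem tartar_inequality (n : ℕ) (hn : 1 ≤ n) (p : ℝ) (hp : 2 ≤ p)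
    (x y : EuclideanSpace ℝ (Fin n)) :
    (2 : ℝ) ^ (3 - p) / p * ‖x - y‖ ^ p ≤
      ⟪(‖x‖ ^ (p - 2)) • x - (‖y‖ ^ (p - 2)) • y, x - y⟫ := by
  rcases eq_or_ne x y with rfl | hxy
  · simp [Real.zero_rpow (show p ≠ 0 by linarith)]
  have hd : 0 < ‖x - y‖ := norm_pos_iff.mpr (sub_ne_zero.mpr hxy)
  have hds : ‖x - y‖ ≤ ‖x‖ + ‖y‖ := norm_sub_le x y
  have hsq : ‖x - y‖ ^ 2 = ‖x‖ ^ 2 - 2 * ⟪x, y⟫ + ‖y‖ ^ 2 := norm_sub_sq_real x y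
  have hI : ⟪(‖x‖ ^ (p - 2)) • x - (‖y‖ ^ (p - 2)) • y, x - y⟫
      = (‖x‖ ^ (p - 2) + ‖y‖ ^ (p - 2)) / 2 * ‖x - y‖ ^ 2
        + (‖x‖ ^ (p - 2) - ‖y‖ ^ (p - 2)) * (‖x‖ - ‖y‖) / 2 * (‖x‖ + ‖y‖) := by
    rw [hsq]
    simp only [inner_sub_left, inner_sub_right, real_inner_smul_left,
      real_inner_self_eq_norm_sq, real_inner_comm x y]
    ring
  rw [hI]
  have ha := norm_nonneg x
  have hb := norm_nonneg y
  generalize ‖x - y‖ = d at *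
  generalize ‖x‖ = a at *
  generalize ‖y‖ = b at *
  have hs : 0 < a + b := by linarith
  have key : ∀ t : ℝ, 0 ≤ t → t ^ (p - 1) = t ^ (p - 2) * t := by
    intro t ht
    rw [← Real.rpow_add_one' ht (by linarith)]
    congr 1; ring
  have hpm := (convexOn_rpow (show 1 ≤ p - 1 by linarith)).2 (Set.mem_Ici.mpr ha)
    (Set.mem_Ici.mpr hb) (show (0 : ℝ) ≤ 1 / 2 by norm_num)
    (show (0 : ℝ) ≤ 1 / 2 by norm_num) (by norm_num)
  simp only [smul_eq_mul] at hpm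
  rw [key a ha, key b hb, key _ (by positivity),
    show 1 / 2 * a + 1 / 2 * b = (a + b) / 2 by ring] at hpm
  have hM : (d / 2) ^ (p - 2) ≤ ((a + b) / 2) ^ (p - 2) :=
    Real.rpow_le_rpow (by positivity) (by linarith) (by linarith)
  have hmono : 0 ≤ (a ^ (p - 2) - b ^ (p - 2)) * (a - b) := by
    rcases le_total a b with h | h
    · have := Real.rpow_le_rpow ha h (show 0 ≤ p - 2 by linarith)
      nlinarith
    · have := Real.rpow_le_rpow hb h (show 0 ≤ p - 2 by linarith)
      nlinarith
  have hL : (2 : ℝ) ^ (3 - p) / p * d ^ p ≤ (d / 2) ^ (p - 2) * d ^ 2 := by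
    have e1 : (2 : ℝ) ^ (3 - p) = 2 * (2 ^ (p - 2))⁻¹ := by
      rw [← Real.rpow_neg (by norm_num), show 3 - p = 1 + -(p - 2) by ring,
        Real.rpow_add (by norm_num), Real.rpow_one]
    have e2 : d ^ p = d ^ (p - 2) * d ^ 2 := by
      rw [← Real.rpow_two, ← Real.rpow_add hd]; congr 1; ring
    rw [e1, e2, Real.div_rpow hd.le (by norm_num)]
    have h2 : 2 / p ≤ 1 := by rw [div_le_one (by linarith)]; exact hp
    have h3 : 0 ≤ d ^ (p - 2) / 2 ^ (p - 2) * d ^ 2 := by positivity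
    calc _ = 2 / p * (d ^ (p - 2) / 2 ^ (p - 2) * d ^ 2) := by ring
      _ ≤ _ := mul_le_of_le_one_left h3 h2
  refine hL.trans ?_
  generalize a ^ (p - 2) = A at *
  generalize b ^ (p - 2) = B at *
  generalize ((a + b) / 2) ^ (p - 2) = M at *
  generalize (d / 2) ^ (p - 2) = D at *
  refine le_of_mul_le_mul_right ?_ hs
  have hd2 : d ^ 2 ≤ (a + b) ^ 2 := by gcongr
  have h1 := mul_le_mul_of_nonneg_left hd2 hmono
  have h2 : D * (a + b) ≤ A * a + B * b := by nlinarith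
  have h3 := mul_le_mul_of_nonneg_right h2 (sq_nonneg d)
  nlinarith
end

section
/- Let n ≥ 1 and let p⁺ ≥ 2 be a real number. Then for every real number p with 2 ≤ p ≤ p⁺ and all vectors x, y ∈ ℝⁿ with |x| ≤ 1 and |y| ≤ 1, one has | |x|^{p-2} x − |y|^{p-2} y | ≤ (p⁺ − 1) · |x − y|, where |·| denotes the Euclidean norm. -/
theorem aux_scalar (a b q : ℝ) (hb : 0 ≤ b) (hab : b ≤ a) (ha : a ≤ 1) (hq : 0 ≤ q) :
    (a ^ q - b ^ q) * b ≤ q * (a - b) := by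
  rcases hb.eq_or_lt with h | h
  · subst h
    have : 0 ≤ q * a := mul_nonneg hq hab
    simpa using this
  · have ha0 : 0 < a := h.trans_le hab
    have hr : 0 < b / a := div_pos h ha0
    have h1 : b ^ q = a ^ q * (b / a) ^ q := by
      rw [← Real.mul_rpow ha0.le hr.le, mul_div_cancel₀ _ ha0.ne']
    have h2 : 1 + q * Real.log (b / a) ≤ (b / a) ^ q := by
      rw [Real.rpow_def_of_pos hr]
      have := Real.add_one_le_exp (Real.log (b / a) * q)
      linarith
    have h3 := Real.one_sub_inv_le_log_of_pos hr
    have h4 : a ^ q ≤ 1 := Real.rpow_le_one ha0.le ha hq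
    have h5 : 0 ≤ a ^ q := Real.rpow_nonneg ha0.le q
    have h6 : 1 - (b / a) ^ q ≤ q * ((b / a)⁻¹ - 1) := by
      nlinarith [mul_le_mul_of_nonneg_left h3 hq]
    have h7 : ((b / a)⁻¹ - 1) * b = a - b := by
      field_simp
    have h8 : (1 - (b / a) ^ q) * b ≤ q * (a - b) := by
      rw [← h7, ← mul_assoc]
      exact mul_le_mul_of_nonneg_right h6 h.le
    have h9 : 0 ≤ q * (a - b) := mul_nonneg hq (sub_nonneg.2 hab)
    calc (a ^ q - b ^ q) * b = a ^ q * ((1 - (b / a) ^ q) * b) := by rw [h1]; ring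
      _ ≤ a ^ q * (q * (a - b)) := mul_le_mul_of_nonneg_left h8 h5
      _ ≤ q * (a - b) := mul_le_of_le_one_left h9 h4

theorem aux_vec (n : ℕ) (q : ℝ) (hq : 0 ≤ q)
    (x y : EuclideanSpace ℝ (Fin n)) (hx : ‖x‖ ≤ 1) (hxy : ‖y‖ ≤ ‖x‖) :
    ‖(‖x‖ ^ q) • x - (‖y‖ ^ q) • y‖ ≤ (q + 1) * ‖x - y‖ := by
  have e : (‖x‖ ^ q) • x - (‖y‖ ^ q) • y
      = (‖x‖ ^ q) • (x - y) + (‖x‖ ^ q - ‖y‖ ^ q) • y := by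
    rw [smul_sub, sub_smul]; abel
  have h1 : 0 ≤ ‖x‖ ^ q - ‖y‖ ^ q :=
    sub_nonneg.2 (Real.rpow_le_rpow (norm_nonneg _) hxy hq)
  have h5 : 0 ≤ ‖x‖ ^ q := Real.rpow_nonneg (norm_nonneg _) q
  have h4 : ‖x‖ ^ q ≤ 1 := Real.rpow_le_one (norm_nonneg _) hx hq
  have h2 := aux_scalar ‖x‖ ‖y‖ q (norm_nonneg _) hxy hx hq
  have h3 := mul_le_mul_of_nonneg_left (norm_sub_norm_le x y) hq
  have h6 := mul_le_of_le_one_left (norm_nonneg (x - y)) h4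
  rw [e]
  refine (norm_add_le _ _).trans ?_
  rw [norm_smul, norm_smul, Real.norm_of_nonneg h1, Real.norm_of_nonneg h5]
  linarith

/-- Local Lipschitz estimate for `z ↦ |z|^{p-2} z` on the closed unit ball of `ℝⁿ`,
uniform over exponents `p ∈ [2, p⁺]`. -/
theorem power_map_lipschitz_on_unit_ball (n : ℕ) (hn : 1 ≤ n) (pplus : ℝ)
    (hpplus : 2 ≤ pplus) (p : ℝ) (hp : 2 ≤ p) (hppp : p ≤ pplus)
    (x y : EuclideanSpace ℝ (Fin n)) (hx : ‖x‖ ≤ 1) (hy : ‖y‖ ≤ 1) :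
    ‖(‖x‖ ^ (p - 2)) • x - (‖y‖ ^ (p - 2)) • y‖ ≤ (pplus - 1) * ‖x - y‖ := by
  have hq : 0 ≤ p - 2 := by linarith
  have h : ‖(‖x‖ ^ (p - 2)) • x - (‖y‖ ^ (p - 2)) • y‖ ≤ (p - 2 + 1) * ‖x - y‖ := by
    rcases le_total ‖y‖ ‖x‖ with h | h
    · exact aux_vec n _ hq x y hx h
    · rw [norm_sub_rev, norm_sub_rev x y]
      exact aux_vec n _ hq y x hy h
  exact h.trans (mul_le_mul_of_nonneg_right (by linarith) (norm_nonneg _))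
end
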